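/- Let n ≥ 5 be an integer. Then ∫_{ℝⁿ₊} |x + eₙ|^{−4} · ( (xₙ³/(6n(1 + xₙ))) · |x + eₙ|^{−n} )² · x₁⁴ dx = 15·ω_{n−2}·B((n−1)/2, (n+1)/2) / (2(n+2)(n+1)²·n⁴·(n−1)(n−2)(n−3)(n−4)). -/

import Mathlib

/-!
Write `x = (y, t)` with `t = xₙ`. The integrand is `1 / (36 n²)` times
`t⁶ (1 + t)⁻² x₁⁴ Q⁻⁽ⁿ⁺²⁾`, where `Q = |x + eₙ|² = (1 + t)² + |y|²`. The power of `Q` is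
subordinated to Gaussians, `Γ(n + 2) Q⁻⁽ⁿ⁺²⁾ = ∫₀^∞ uⁿ⁺¹ e^{-uQ} du`, so that for fixed `u` the
integrand is a product of functions of one coordinate each. Every factor in `y` is a Gaussian,
or its fourth moment `(3/4) u⁻² √(π/u)`, and integrating them leaves (`gaussian_power`)
`(3/4) π^{(n-1)/2} u^{(n+1)/2 - 1}`. Integrating over `u` next turns the remaining factor
`e^{-u(1+t)²}` into `Γ((n+1)/2) (1 + t)^{-(n+1)}`, and what is left is the Beta integral
`∫₀^∞ t⁶ (1 + t)^{-(n+3)} dt = Γ(7) Γ(n - 4) / Γ(n + 3)` (`lintegral_beta`, by the same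
subordination), which converges because `n > 4`. The functional equation of `Γ` then gives the
constant (`final_constant`).

The integrals are computed as lower Lebesgue integrals of nonnegative functions, so Tonelli's
theorem applies without integrability conditions.
-/

open MeasureTheory Set

/-- `sphereVol k` is the `k`-dimensional volume of the unit sphere `S^k ⊂ ℝ^{k+1}`,
namely `ω_k = 2 π^{(k+1)/2} / Γ((k+1)/2)`. -/
noncomputable def sphereVol (k : ℕ) : ℝ :=
  2 * Real.pi ^ ((k + 1 : ℝ) / 2) / Real.Gamma ((k + 1 : ℝ) / 2)

/-- The Euler Beta function `B(a,b) = Γ(a)Γ(b)/Γ(a+b)`. -/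
noncomputable def realBeta (a b : ℝ) : ℝ :=
  Real.Gamma a * Real.Gamma b / Real.Gamma (a + b)

/-! ### Gamma and Beta integrals -/

lemma lintegral_gamma {a r : ℝ} (ha : 0 < a) (hr : 0 < r) :
    ∫⁻ u in Ioi (0 : ℝ), ENNReal.ofReal (u ^ (a - 1) * Real.exp (-(r * u)))
      = ENNReal.ofReal ((1 / r) ^ a * Real.Gamma a) := by
  have key := Real.integral_rpow_mul_exp_neg_mul_Ioi ha hr
  have hpos : 0 < (1 / r) ^ a * Real.Gamma a :=
    mul_pos (Real.rpow_pos_of_pos (by positivity) _) (Real.Gamma_pos_of_pos ha)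
  rw [← key, ofReal_integral_eq_lintegral_ofReal]
  · exact .of_integral_ne_zero (by rw [key]; exact hpos.ne')
  · filter_upwards [ae_restrict_mem measurableSet_Ioi] with u hu
    have : (0 : ℝ) < u := hu
    simp only [Pi.zero_apply]
    positivity

lemma lintegral_gamma_nat (k : ℕ) {r : ℝ} (hr : 0 < r) :
    ∫⁻ u in Ioi (0 : ℝ), ENNReal.ofReal (u ^ k * Real.exp (-(r * u)))
      = ENNReal.ofReal ((1 / r) ^ (k + 1) * Real.Gamma (k + 1)) := by
  have h := lintegral_gamma (a := k + 1) (by positivity) hr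
  simp only [add_sub_cancel_right, Real.rpow_natCast] at h
  rw [h]
  norm_cast

/-- The Beta integral, from `Γ(n + 3) (1 + t)^{-(n+3)} = ∫₀^∞ v^{n+2} e^{-v(1+t)} dv` and
Tonelli's theorem. -/
lemma lintegral_beta (n : ℕ) (hn : 5 ≤ n) :
    ∫⁻ t in Ioi (0 : ℝ), ENNReal.ofReal (t ^ 6 / (1 + t) ^ (n + 3))
      = ENNReal.ofReal (720 * Real.Gamma (n - 4) / Real.Gamma (n + 3)) := by
  have hG : 0 < Real.Gamma (n + 3) := Real.Gamma_pos_of_pos (by positivity)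
  have h5 : (5 : ℝ) ≤ n := by exact_mod_cast hn
  have hG6 : Real.Gamma (6 + 1) = 720 := by
    have := Real.Gamma_nat_eq_factorial 6
    norm_num [Nat.factorial] at this ⊢
  have hmul : ENNReal.ofReal (Real.Gamma (n + 3)) *
      ∫⁻ t in Ioi (0 : ℝ), ENNReal.ofReal (t ^ 6 / (1 + t) ^ (n + 3))
      = ENNReal.ofReal (720 * Real.Gamma (n - 4)) := by
    rw [← lintegral_const_mul _ (by fun_prop)]
    calc _ = ∫⁻ t in Ioi (0 : ℝ), ∫⁻ v in Ioi (0 : ℝ),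
          ENNReal.ofReal (v ^ (n + 2) * Real.exp (-v)) *
            ENNReal.ofReal (t ^ 6 * Real.exp (-(v * t))) := by
          refine setLIntegral_congr_fun measurableSet_Ioi fun t ht => ?_
          have ht : 0 < t := ht
          have h := lintegral_gamma_nat (n + 2) (r := 1 + t) (by positivity)
          have e : ((n + 2 : ℕ) : ℝ) + 1 = n + 3 := by push_cast; ring
          rw [e] at h
          calc _ = ENNReal.ofReal (t ^ 6) *
                ENNReal.ofReal ((1 / (1 + t)) ^ (n + 2 + 1) * Real.Gamma (n + 3)) := by
                  rw [← ENNReal.ofReal_mul hG.le, ← ENNReal.ofReal_mul (by positivity)]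
                  congr 1
                  rw [one_div_pow]; ring
            _ = _ := by
                  rw [← h, ← lintegral_const_mul _ (by fun_prop)]
                  refine setLIntegral_congr_fun measurableSet_Ioi fun v hv => ?_
                  have hv : 0 < v := hv
                  rw [← ENNReal.ofReal_mul (by positivity), ← ENNReal.ofReal_mul (by positivity)]
                  congr 1
                  rw [show -((1 + t) * v) = -v + -(v * t) by ring, Real.exp_add]
                  ring
      _ = ∫⁻ v in Ioi (0 : ℝ), ∫⁻ t in Ioi (0 : ℝ),
          ENNReal.ofReal (v ^ (n + 2) * Real.exp (-v)) *
            ENNReal.ofReal (t ^ 6 * Real.exp (-(v * t))) := by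
          apply lintegral_lintegral_swap
          fun_prop
      _ = ∫⁻ v in Ioi (0 : ℝ), ENNReal.ofReal 720 *
            ENNReal.ofReal (v ^ ((n - 4 : ℝ) - 1) * Real.exp (-(1 * v))) := by
          refine setLIntegral_congr_fun measurableSet_Ioi fun v hv => ?_
          have hv : 0 < v := hv
          have h := lintegral_gamma_nat 6 hv
          rw [lintegral_const_mul _ (by fun_prop), h, ← ENNReal.ofReal_mul (by positivity),
            ← ENNReal.ofReal_mul (by positivity)]
          congr 1
          have e : v ^ ((n - 4 : ℝ) - 1) = v ^ (n + 2) / v ^ 7 := by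
            rw [← Real.rpow_natCast, ← Real.rpow_natCast, ← Real.rpow_sub hv]
            congr 1; push_cast; ring
          push_cast
          rw [e, hG6, one_mul, one_div_pow]
          ring
      _ = _ := by
          rw [lintegral_const_mul _ (by fun_prop), lintegral_gamma (by linarith) one_pos,
            ← ENNReal.ofReal_mul (by positivity)]
          simp
  rw [ENNReal.ofReal_div_of_pos hG, ← hmul, mul_comm, ENNReal.mul_div_cancel_right]
  · simpa using hG
  · simp

/-! ### Gaussian factors in one variable -/

lemma integral_fourth_gaussian {u : ℝ} (hu : 0 < u) :
    ∫ x : ℝ, x ^ 4 * Real.exp (-u * x ^ 2) = 3 / 4 / u ^ 2 * √(Real.pi / u) := by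
  have h := integral_comp_abs (f := fun x : ℝ => x ^ 4 * Real.exp (-u * x ^ 2))
  have e4 : ∀ x : ℝ, |x| ^ 4 = x ^ 4 := fun x => Even.pow_abs (by decide) x
  simp only [sq_abs, e4] at h
  have h2 := integral_rpow_mul_exp_neg_mul_rpow (p := 2) (q := 4) (b := u) two_pos
    (by norm_num) hu
  have hc : ∀ (x : ℝ), x ^ (4 : ℝ) = x ^ 4 := fun x => by exact_mod_cast Real.rpow_natCast x 4
  have hc' : ∀ (x : ℝ), x ^ (2 : ℝ) = x ^ 2 := fun x => by exact_mod_cast Real.rpow_natCast x 2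
  simp only [hc, hc'] at h2
  rw [h, h2]
  have g : Real.Gamma ((4 + 1) / 2) = 3 / 4 * √Real.pi := by
    have := Real.Gamma_nat_add_half 2
    norm_num [Nat.doubleFactorial] at this ⊢
    rw [this]; ring
  have e : u ^ (-(4 + 1) / 2 : ℝ) = 1 / (u ^ 2 * √u) := by
    rw [Real.sqrt_eq_rpow, ← Real.rpow_natCast, ← Real.rpow_add hu, one_div, ← Real.rpow_neg hu.le]
    norm_num
  rw [g, e, Real.sqrt_div Real.pi_pos.le]
  field_simp

lemma integrable_fourth_gaussian {u : ℝ} (hu : 0 < u) (k : ℕ) :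
    Integrable fun x : ℝ => x ^ k * Real.exp (-u * x ^ 2) := by
  have := integrable_rpow_mul_exp_neg_mul_sq hu (s := k) (by linarith [(Nat.cast_nonneg k : (0:ℝ) ≤ k)])
  simpa using this

/-- The factor of the Gaussian-subordinated integrand that depends on the normal coordinate `t`.
It vanishes for `t ≤ 0`, which encodes the restriction to the half-space and keeps the integrand
a product over all coordinates of `ℝⁿ`. -/
noncomputable def radialFactor (u t : ℝ) : ℝ :=
  (Ioi (0 : ℝ)).indicator (fun t => t ^ 6 / (1 + t) ^ 2 * Real.exp (-u * (1 + t) ^ 2)) t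

lemma radialFactor_nonneg (u t : ℝ) : 0 ≤ radialFactor u t :=
  indicator_nonneg (fun t _ => by positivity) t

@[fun_prop]
lemma measurable_radialFactor : Measurable fun p : ℝ × ℝ => radialFactor p.1 p.2 := by
  have : (fun p : ℝ × ℝ => radialFactor p.1 p.2) = (Prod.snd ⁻¹' Ioi (0 : ℝ)).indicator
      (fun p => p.2 ^ 6 / (1 + p.2) ^ 2 * Real.exp (-p.1 * (1 + p.2) ^ 2)) := by
    ext p; simp [radialFactor, indicator]
  rw [this]
  exact Measurable.indicator (by fun_prop) (measurable_snd measurableSet_Ioi)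

lemma integrable_radialFactor {u : ℝ} (hu : 0 < u) : Integrable (radialFactor u) := by
  refine (integrable_fourth_gaussian hu 6).mono'
    (measurable_radialFactor.comp (measurable_const.prodMk measurable_id)).aestronglyMeasurable
    (.of_forall fun t => ?_)
  rw [Real.norm_of_nonneg (radialFactor_nonneg u t), radialFactor]
  by_cases ht : t ∈ Ioi (0 : ℝ)
  · rw [indicator_of_mem ht]
    have ht : 0 < t := ht
    -- For `t > 0` the factor is dominated by the Gaussian moment `t⁶ e^{-ut²}`.
    have h1 : t ^ 6 / (1 + t) ^ 2 ≤ t ^ 6 := div_le_self (by positivity) (by nlinarith)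
    have h2 : -u * (1 + t) ^ 2 ≤ -u * t ^ 2 := by nlinarith [mul_pos hu ht]
    gcongr
  · rw [indicator_of_notMem ht]; positivity

/-! ### Product structure on `ℝⁿ` -/

/-- The factor of the Gaussian-subordinated integrand that depends on the `i`-th coordinate; `l`
is the normal direction and `z` the tangential direction carrying the fourth power. -/
noncomputable def factor {n : ℕ} (l z : Fin n) (u : ℝ) (i : Fin n) (t : ℝ) : ℝ :=
  if i = l then radialFactor u t
  else if i = z then t ^ 4 * Real.exp (-u * t ^ 2) else Real.exp (-u * t ^ 2)

lemma prod_ite_two {n : ℕ} {M : Type*} [CommMonoid M] {l z : Fin n} (h : z ≠ l) (a b c : M) :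
    ∏ i : Fin n, (if i = l then a else if i = z then b else c) = a * b * c ^ (n - 2) := by
  rw [← Finset.mul_prod_erase _ _ (Finset.mem_univ l),
    ← Finset.mul_prod_erase _ _ (Finset.mem_erase.2 ⟨h, Finset.mem_univ z⟩),
    Finset.prod_congr rfl (g := fun _ => c)]
  · simp [h, mul_assoc, Finset.card_erase_of_mem, Nat.sub_sub]
  · intro i hi
    simp only [Finset.mem_erase] at hi
    simp [hi.1, hi.2.1]

/-- For fixed `u` the integral over `ℝⁿ` splits into one-dimensional integrals. The one in the
normal direction is left unevaluated, to be exchanged with the integral over `u`. -/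
lemma lintegral_prod_factor {n : ℕ} {l z : Fin n} (h : z ≠ l) {u : ℝ} (hu : 0 < u) :
    ∫⁻ x : Fin n → ℝ, ENNReal.ofReal (∏ i, factor l z u i (x i))
      = (∫⁻ t in Ioi (0 : ℝ), ENNReal.ofReal (t ^ 6 / (1 + t) ^ 2 * Real.exp (-u * (1 + t) ^ 2)))
        * ENNReal.ofReal (3 / 4 / u ^ 2 * √(Real.pi / u) * √(Real.pi / u) ^ (n - 2)) := by
  have hg := integrable_fourth_gaussian hu 0
  simp only [pow_zero, one_mul] at hg
  have hint : ∀ i, Integrable (factor l z u i) := by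
    intro i
    unfold factor
    split_ifs
    · exact integrable_radialFactor hu
    · exact integrable_fourth_gaussian hu 4
    · exact hg
  have hnn : ∀ i t, 0 ≤ factor l z u i t := by
    intro i t
    unfold factor
    split_ifs
    · exact radialFactor_nonneg u t
    · positivity
    · positivity
  have hp : Integrable (fun x : Fin n → ℝ => ∏ i, factor l z u i (x i)) :=
    Integrable.fintype_prod hint
  rw [← ofReal_integral_eq_lintegral_ofReal hp
    (.of_forall fun x => Finset.prod_nonneg fun i _ => hnn i _),
    integral_fintype_prod_volume_eq_prod]
  have hi : ∀ i, ∫ t, factor l z u i t = if i = l then ∫ t, radialFactor u t else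
      if i = z then 3 / 4 / u ^ 2 * √(Real.pi / u) else √(Real.pi / u) := by
    intro i
    unfold factor
    split_ifs
    · rfl
    · exact integral_fourth_gaussian hu
    · exact integral_gaussian u
  simp only [hi]
  rw [prod_ite_two h, mul_assoc, ENNReal.ofReal_mul (integral_nonneg (radialFactor_nonneg u)),
    ofReal_integral_eq_lintegral_ofReal (integrable_radialFactor hu)
      (.of_forall (radialFactor_nonneg u)), ← lintegral_indicator measurableSet_Ioi]
  congr 1
  refine lintegral_congr fun t => ?_
  unfold radialFactor
  by_cases ht : t ∈ Ioi (0 : ℝ)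
  · rw [indicator_of_mem ht, indicator_of_mem ht]
  · rw [indicator_of_notMem ht, indicator_of_notMem ht, ENNReal.ofReal_zero]

/-- On the half-space the product of the factors is the subordinated integrand
`t⁶ (1 + t)⁻² x_z⁴ e^{-uQ}`. -/
lemma prod_factor {n : ℕ} {l z : Fin n} (h : z ≠ l) (u : ℝ) (x : Fin n → ℝ) (hx : 0 < x l) :
    ∏ i, factor l z u i (x i) = x l ^ 6 / (1 + x l) ^ 2 * x z ^ 4 *
      Real.exp (-(((1 + x l) ^ 2 + ∑ i ∈ Finset.univ.erase l, x i ^ 2) * u)) := by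
  have hz : z ∈ Finset.univ.erase l := Finset.mem_erase.2 ⟨h, Finset.mem_univ z⟩
  rw [← Finset.mul_prod_erase _ _ (Finset.mem_univ l), ← Finset.mul_prod_erase _ _ hz,
    ← Finset.add_sum_erase _ _ hz,
    Finset.prod_congr rfl (g := fun i => Real.exp (-u * x i ^ 2)), ← Real.exp_sum,
    ← Finset.mul_sum]
  · have e : -(((1 + x l) ^ 2 + (x z ^ 2 + ∑ i ∈ (Finset.univ.erase l).erase z, x i ^ 2)) * u)
        = -u * (1 + x l) ^ 2 + (-u * x z ^ 2
          + -u * ∑ i ∈ (Finset.univ.erase l).erase z, x i ^ 2) := by ring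
    rw [e, Real.exp_add, Real.exp_add]
    simp only [factor, radialFactor, if_true, if_neg h, indicator_of_mem (mem_Ioi.2 hx)]
    ring
  · intro i hi
    simp only [Finset.mem_erase] at hi
    simp [factor, hi.1, hi.2.1]

@[fun_prop]
lemma measurable_factor {n : ℕ} (l z i : Fin n) :
    Measurable fun p : ℝ × ℝ => factor l z p.1 i p.2 := by
  unfold factor
  split_ifs <;> fun_prop

/-- The powers of `u` from the subordination and from the tangential Gaussian integrals combine
to the weight of a Gamma integral with parameter `(n + 1) / 2`. -/
lemma gaussian_power {n : ℕ} (hn : 5 ≤ n) {u : ℝ} (hu : 0 < u) :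
    u ^ (n + 1) * (3 / 4 / u ^ 2 * √(Real.pi / u) * √(Real.pi / u) ^ (n - 2))
      = 3 / 4 * Real.pi ^ (((n : ℝ) - 1) / 2) * u ^ (((n : ℝ) + 1) / 2 - 1) := by
  have h1 : √(Real.pi / u) * √(Real.pi / u) ^ (n - 2) = (Real.pi / u) ^ (((n : ℝ) - 1) / 2) := by
    rw [← pow_succ', Real.sqrt_eq_rpow, ← Real.rpow_natCast, ← Real.rpow_mul (by positivity)]
    congr 1
    rw [show n - 2 + 1 = n - 1 by omega, Nat.cast_sub (by omega)]
    push_cast; ring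
  have h2 : u ^ (((n : ℝ) + 1) / 2 - 1) = u ^ (n + 1) / u ^ 2 / u ^ (((n : ℝ) - 1) / 2) := by
    rw [← Real.rpow_natCast, ← Real.rpow_natCast, ← Real.rpow_sub hu, ← Real.rpow_sub hu]
    congr 1; push_cast; ring
  rw [mul_assoc (3 / 4 / u ^ 2), h1, h2, Real.div_rpow Real.pi_pos.le hu.le]
  ring

/-! ### The half-space integral -/

lemma lintegral_halfSpace {n : ℕ} (hn : 5 ≤ n) {l z : Fin n} (h : z ≠ l) :
    ∫⁻ x in {x : Fin n → ℝ | 0 < x l}, ENNReal.ofReal (x l ^ 6 / (1 + x l) ^ 2 * x z ^ 4 /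
      ((1 + x l) ^ 2 + ∑ i ∈ Finset.univ.erase l, x i ^ 2) ^ (n + 2))
    = ENNReal.ofReal (3 / 4 * Real.pi ^ (((n : ℝ) - 1) / 2) * Real.Gamma (((n : ℝ) + 1) / 2) *
        (720 * Real.Gamma (n - 4) / Real.Gamma (n + 3)) / Real.Gamma (n + 2)) := by
  have hG : 0 < Real.Gamma (n + 2) := Real.Gamma_pos_of_pos (by positivity)
  have hG' : 0 < Real.Gamma (((n : ℝ) + 1) / 2) := Real.Gamma_pos_of_pos (by positivity)
  have hS : MeasurableSet {x : Fin n → ℝ | 0 < x l} :=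
    measurableSet_lt measurable_const (measurable_pi_apply l)
  have hzero : ∀ (u : ℝ) (x : Fin n → ℝ), ¬ 0 < x l → ∏ i, factor l z u i (x i) = 0 := by
    intro u x hx
    refine Finset.prod_eq_zero (Finset.mem_univ l) ?_
    simp only [factor, if_true, radialFactor]
    exact indicator_of_notMem hx _
  have hmul : ENNReal.ofReal (Real.Gamma (n + 2)) *
      ∫⁻ x in {x : Fin n → ℝ | 0 < x l}, ENNReal.ofReal (x l ^ 6 / (1 + x l) ^ 2 * x z ^ 4 /
        ((1 + x l) ^ 2 + ∑ i ∈ Finset.univ.erase l, x i ^ 2) ^ (n + 2))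
      = ENNReal.ofReal (3 / 4 * Real.pi ^ (((n : ℝ) - 1) / 2) *
        Real.Gamma (((n : ℝ) + 1) / 2) * (720 * Real.Gamma (n - 4) / Real.Gamma (n + 3))) := by
    rw [← lintegral_const_mul _ (by fun_prop), ← lintegral_indicator hS]
    calc _ = ∫⁻ x : Fin n → ℝ, ∫⁻ u in Ioi (0 : ℝ),
          ENNReal.ofReal (u ^ (n + 1)) * ENNReal.ofReal (∏ i, factor l z u i (x i)) := by
          refine lintegral_congr fun x => ?_
          by_cases hx : 0 < x l
          · rw [indicator_of_mem (show x ∈ {x : Fin n → ℝ | 0 < x l} from hx)]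
            set Q := (1 + x l) ^ 2 + ∑ i ∈ Finset.univ.erase l, x i ^ 2 with hQ
            have hQ0 : 0 < Q := by positivity
            have hg := lintegral_gamma_nat (n + 1) hQ0
            have e : ((n + 1 : ℕ) : ℝ) + 1 = n + 2 := by push_cast; ring
            rw [e] at hg
            calc _ = ENNReal.ofReal (x l ^ 6 / (1 + x l) ^ 2 * x z ^ 4) *
                  ENNReal.ofReal ((1 / Q) ^ (n + 1 + 1) * Real.Gamma (n + 2)) := by
                    rw [← ENNReal.ofReal_mul hG.le, ← ENNReal.ofReal_mul (by positivity)]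
                    congr 1
                    rw [one_div_pow]; ring
              _ = _ := by
                    rw [← hg, ← lintegral_const_mul _ (by fun_prop)]
                    refine setLIntegral_congr_fun measurableSet_Ioi fun u hu => ?_
                    have hu : 0 < u := hu
                    rw [prod_factor h u x hx, ← ENNReal.ofReal_mul (by positivity),
                      ← ENNReal.ofReal_mul (by positivity)]
                    congr 1
                    ring
          · rw [indicator_of_notMem (show x ∉ {x : Fin n → ℝ | 0 < x l} from hx)]
            simp [hzero _ x hx]
      _ = ∫⁻ u in Ioi (0 : ℝ), ∫⁻ x : Fin n → ℝ,
          ENNReal.ofReal (u ^ (n + 1)) * ENNReal.ofReal (∏ i, factor l z u i (x i)) := by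
          apply lintegral_lintegral_swap
          refine Measurable.aemeasurable ?_
          refine Measurable.mul (by fun_prop) (Measurable.ennreal_ofReal ?_)
          refine Finset.measurable_fun_prod _ fun i _ => ?_
          exact (measurable_factor l z i).comp
            (measurable_snd.prodMk ((measurable_pi_apply i).comp measurable_fst))
      _ = ∫⁻ u in Ioi (0 : ℝ), ∫⁻ t in Ioi (0 : ℝ),
          ENNReal.ofReal (3 / 4 * Real.pi ^ (((n : ℝ) - 1) / 2) * u ^ (((n : ℝ) + 1) / 2 - 1)) *
          ENNReal.ofReal (t ^ 6 / (1 + t) ^ 2 * Real.exp (-u * (1 + t) ^ 2)) := by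
          refine setLIntegral_congr_fun measurableSet_Ioi fun u hu => ?_
          have hu : 0 < u := hu
          have hm : Measurable fun x : Fin n → ℝ =>
              ENNReal.ofReal (∏ i, factor l z u i (x i)) := by
            refine Measurable.ennreal_ofReal (Finset.measurable_fun_prod _ fun i _ => ?_)
            exact (measurable_factor l z i).comp
              (measurable_const.prodMk (measurable_pi_apply i))
          rw [lintegral_const_mul _ hm, lintegral_prod_factor h hu,
            lintegral_const_mul _ (by fun_prop), ← gaussian_power hn hu,
            ENNReal.ofReal_mul (p := u ^ (n + 1)) (by positivity)]
          ring
      _ = ∫⁻ t in Ioi (0 : ℝ), ∫⁻ u in Ioi (0 : ℝ),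
          ENNReal.ofReal (3 / 4 * Real.pi ^ (((n : ℝ) - 1) / 2) * u ^ (((n : ℝ) + 1) / 2 - 1)) *
          ENNReal.ofReal (t ^ 6 / (1 + t) ^ 2 * Real.exp (-u * (1 + t) ^ 2)) := by
          apply lintegral_lintegral_swap
          fun_prop
      _ = ∫⁻ t in Ioi (0 : ℝ), ENNReal.ofReal (3 / 4 * Real.pi ^ (((n : ℝ) - 1) / 2) *
            Real.Gamma (((n : ℝ) + 1) / 2)) * ENNReal.ofReal (t ^ 6 / (1 + t) ^ (n + 3)) := by
          refine setLIntegral_congr_fun measurableSet_Ioi fun t ht => ?_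
          have ht : 0 < t := ht
          have ht1 : 0 < 1 + t := by positivity
          have hg := lintegral_gamma (a := ((n : ℝ) + 1) / 2) (r := (1 + t) ^ 2)
            (by positivity) (by positivity)
          have e : (1 / (1 + t) ^ 2) ^ (((n : ℝ) + 1) / 2) = 1 / (1 + t) ^ (n + 1) := by
            rw [Real.div_rpow zero_le_one (by positivity), Real.one_rpow, ← Real.rpow_natCast,
              ← Real.rpow_mul ht1.le, ← Real.rpow_natCast]
            congr 2
            push_cast; ring
          calc _ = ∫⁻ u in Ioi (0 : ℝ), ENNReal.ofReal (3 / 4 * Real.pi ^ (((n : ℝ) - 1) / 2) *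
                (t ^ 6 / (1 + t) ^ 2)) *
                ENNReal.ofReal (u ^ (((n : ℝ) + 1) / 2 - 1) * Real.exp (-((1 + t) ^ 2 * u))) := by
                refine setLIntegral_congr_fun measurableSet_Ioi fun u hu => ?_
                have hu : 0 < u := hu
                rw [← ENNReal.ofReal_mul (by positivity), ← ENNReal.ofReal_mul (by positivity),
                  show -u * (1 + t) ^ 2 = -((1 + t) ^ 2 * u) by ring]
                congr 1
                ring
            _ = _ := by
                rw [lintegral_const_mul _ (by fun_prop), hg, ← ENNReal.ofReal_mul (by positivity),
                  ← ENNReal.ofReal_mul (by positivity), e]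
                congr 1
                field_simp
                ring
      _ = _ := by
          rw [lintegral_const_mul _ (by fun_prop), lintegral_beta n hn,
            ← ENNReal.ofReal_mul (by positivity)]
  rw [ENNReal.ofReal_div_of_pos hG, ← hmul, mul_comm, ENNReal.mul_div_cancel_right]
  · simpa using hG
  · simp

lemma norm_add_single_sq {n : ℕ} (l : Fin n) (x : EuclideanSpace ℝ (Fin n)) :
    ‖x + EuclideanSpace.single l (1 : ℝ)‖ ^ 2
      = (1 + x l) ^ 2 + ∑ i ∈ Finset.univ.erase l, x i ^ 2 := by
  rw [EuclideanSpace.norm_sq_eq, ← Finset.add_sum_erase _ _ (Finset.mem_univ l)]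
  congr 1
  · simp [add_comm]
  · refine Finset.sum_congr rfl fun i hi => ?_
    simp [Finset.ne_of_mem_erase hi]

lemma final_constant {n : ℕ} (hn : 5 ≤ n) :
    1 / (36 * (n : ℝ) ^ 2) * (3 / 4 * Real.pi ^ (((n : ℝ) - 1) / 2) *
        Real.Gamma (((n : ℝ) + 1) / 2) *
        (720 * Real.Gamma (n - 4) / Real.Gamma (n + 3)) / Real.Gamma (n + 2))
      = 15 * sphereVol (n - 2) * realBeta (((n : ℝ) - 1) / 2) (((n : ℝ) + 1) / 2)
          / (2 * ((n : ℝ) + 2) * ((n : ℝ) + 1) ^ 2 * (n : ℝ) ^ 4 * ((n : ℝ) - 1)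
              * ((n : ℝ) - 2) * ((n : ℝ) - 3) * ((n : ℝ) - 4)) := by
  -- With `n = m + 5` all Gamma values at integers reduce to `Γ(m + 1)`.
  obtain ⟨m, rfl⟩ : ∃ m, n = m + 5 := ⟨n - 5, by omega⟩
  have s : ∀ a : ℝ, 0 < a → Real.Gamma (a + 1) = a * Real.Gamma a :=
    fun a ha => Real.Gamma_add_one ha.ne'
  have hs : (((m + 5 - 2 : ℕ) : ℝ) + 1) / 2 = ((m : ℝ) + 4) / 2 := by
    rw [show m + 5 - 2 = m + 3 by omega]; push_cast; ring
  simp only [sphereVol, realBeta, hs]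
  have hm : (0 : ℝ) ≤ m := Nat.cast_nonneg m
  push_cast
  have g1 := s ((m : ℝ) + 1) (by positivity)
  have g2 := s ((m : ℝ) + 2) (by positivity)
  have g3 := s ((m : ℝ) + 3) (by positivity)
  have g4 := s ((m : ℝ) + 4) (by positivity)
  have g5 := s ((m : ℝ) + 5) (by positivity)
  have g6 := s ((m : ℝ) + 6) (by positivity)
  have g7 := s ((m : ℝ) + 7) (by positivity)
  ring_nf at g1 g2 g3 g4 g5 g6 g7
  have hA : 0 < Real.Gamma ((m : ℝ) + 1) := Real.Gamma_pos_of_pos (by positivity)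
  have hB : 0 < Real.Gamma (((m : ℝ) + 4) / 2) := Real.Gamma_pos_of_pos (by positivity)
  rw [show ((m : ℝ) + 5 - 4) = 1 + m by ring, show ((m : ℝ) + 5 + 3) = 8 + m by ring,
    show ((m : ℝ) + 5 + 2) = 7 + m by ring, show ((m : ℝ) + 5 - 1) = m + 4 by ring,
    show ((m : ℝ) + 4) / 2 + ((m : ℝ) + 5 + 1) / 2 = 5 + m by ring, g7, g6, g5, g4, g3, g2, g1]
  rw [add_comm (m : ℝ) 1] at hA
  have : (m : ℝ) + 5 - 2 ≠ 0 := by linarith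
  have : (m : ℝ) + 5 - 3 ≠ 0 := by linarith
  field_simp
  ring

/-- `∫_{ℝⁿ₊} |x+eₙ|^{−4} ((xₙ³/(6n(1+xₙ)))|x+eₙ|^{−n})² x₁⁴ dx
  = 15 ω_{n−2} B((n−1)/2,(n+1)/2) / (2(n+2)(n+1)²n⁴(n−1)(n−2)(n−3)(n−4))`. -/
theorem II1_computation (n : ℕ) (hn : 5 ≤ n) :
    ∫ x in {x : EuclideanSpace ℝ (Fin n) | 0 < x ⟨n - 1, by omega⟩},
        ‖x + EuclideanSpace.single (⟨n - 1, by omega⟩ : Fin n) (1 : ℝ)‖ ^ (-4 : ℝ)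
          * ((x ⟨n - 1, by omega⟩) ^ 3 / (6 * (n : ℝ) * (1 + x ⟨n - 1, by omega⟩))
              * ‖x + EuclideanSpace.single (⟨n - 1, by omega⟩ : Fin n) (1 : ℝ)‖
                  ^ (-(n : ℝ))) ^ 2
          * (x ⟨0, by omega⟩) ^ 4
      = 15 * sphereVol (n - 2) * realBeta (((n : ℝ) - 1) / 2) (((n : ℝ) + 1) / 2)
          / (2 * ((n : ℝ) + 2) * ((n : ℝ) + 1) ^ 2 * (n : ℝ) ^ 4 * ((n : ℝ) - 1)
              * ((n : ℝ) - 2) * ((n : ℝ) - 3) * ((n : ℝ) - 4)) := by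
  rw [← final_constant hn]
  set l : Fin n := ⟨n - 1, by omega⟩ with hl
  set z : Fin n := ⟨0, by omega⟩ with hz
  have hzl : z ≠ l := by
    simp only [hl, hz, ne_eq, Fin.mk.injEq]; omega
  have hSm : MeasurableSet {x : Fin n → ℝ | 0 < x l} :=
    measurableSet_lt measurable_const (measurable_pi_apply l)
  have hS : MeasurableSet {x : EuclideanSpace ℝ (Fin n) | 0 < x l} :=
    measurableSet_lt measurable_const (by fun_prop)
  have hn0 : (0 : ℝ) < n := by exact_mod_cast (by omega : 0 < n)
  set F : (Fin n → ℝ) → ℝ := fun x => x l ^ 6 / (1 + x l) ^ 2 * x z ^ 4 /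
      ((1 + x l) ^ 2 + ∑ i ∈ Finset.univ.erase l, x i ^ 2) ^ (n + 2) with hF
  have hF0 : ∀ x, 0 ≤ F x := fun x => by
    have : 0 ≤ ∑ i ∈ Finset.univ.erase l, x i ^ 2 := Finset.sum_nonneg fun i _ => sq_nonneg _
    simp only [hF]; positivity
  have hFm : Measurable F := by simp only [hF]; fun_prop
  calc _ = ∫ x in {x : EuclideanSpace ℝ (Fin n) | 0 < x l},
        1 / (36 * (n : ℝ) ^ 2) * F (WithLp.ofLp x) := by
        refine setIntegral_congr_fun hS fun x hx => ?_
        have hx : 0 < x l := hx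
        have hN := norm_add_single_sq l x
        set N := ‖x + EuclideanSpace.single l (1 : ℝ)‖
        have hN0 : 0 < N := by
          have : 0 < N ^ 2 := by rw [hN]; positivity
          exact lt_of_le_of_ne (norm_nonneg _) fun h0 => by
            rw [← h0] at this; norm_num at this
        have e4 : N ^ (-4 : ℝ) = 1 / N ^ 4 := by
          rw [Real.rpow_neg hN0.le, one_div]; norm_cast
        have en : N ^ (-(n : ℝ)) = 1 / N ^ n := by
          rw [Real.rpow_neg hN0.le, one_div, Real.rpow_natCast]
        simp only [hF, ← hN]
        rw [e4, en]
        field_simp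
        ring
    _ = 1 / (36 * (n : ℝ) ^ 2) * ∫ x in {x : Fin n → ℝ | 0 < x l}, F x := by
        rw [integral_const_mul]
        congr 1
        exact (PiLp.volume_preserving_ofLp (Fin n)).setIntegral_preimage_emb
          (MeasurableEquiv.toLp 2 (Fin n → ℝ)).symm.measurableEmbedding F {x | 0 < x l}
    _ = _ := by
        have h5 : (5 : ℝ) ≤ n := by exact_mod_cast hn
        have p1 := Real.Gamma_pos_of_pos (s := ((n : ℝ) + 1) / 2) (by positivity)
        have p2 := Real.Gamma_pos_of_pos (s := (n : ℝ) - 4) (by linarith)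
        have p3 := Real.Gamma_pos_of_pos (s := (n : ℝ) + 3) (by positivity)
        have p4 := Real.Gamma_pos_of_pos (s := (n : ℝ) + 2) (by positivity)
        rw [integral_eq_lintegral_of_nonneg_ae (.of_forall hF0) hFm.aestronglyMeasurable,
          lintegral_halfSpace hn hzl, ENNReal.toReal_ofReal (by positivity)]
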